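/- arXiv:1707.00566 — 9 statements merged into one kernel-verified Lean document; each statement's English description precedes it below -/
import Mathlib

section
/- Let N be a finite set, K a real number, and u : N → ℝ with u_i ≥ 0 for all i ∈ N. Then the set function U^{DI}(A) = (K − |A|)·Σ_{i∈A} u_i defined on subsets A ⊆ N is normalized (U^{DI}(∅) = 0), nonnegative on every A with |A| ≤ K, and submodular: for all A ⊆ B ⊆ N and every x ∈ N \ B, U^{DI}(A ∪ {x}) − U^{DI}(A) ≥ U^{DI}(B ∪ {x}) − U^{DI}(B). -/
/-- The Direct Inspection utility `U^{DI}(A) = (K − |A|)·Σ_{i∈A} u_i`. -/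
noncomputable def UDI {ι : Type*} (K : ℝ) (u : ι → ℝ) (A : Finset ι) : ℝ :=
  (K - A.card) * ∑ i ∈ A, u i

/-- Paper's Lemma 1: `U^{DI}` is normalized, nonnegative (on sets with `|A| ≤ K`)
and submodular. -/
theorem stmt_0 {ι : Type*} [DecidableEq ι] (N : Finset ι) (K : ℝ) (u : ι → ℝ)
    (hu : ∀ i ∈ N, 0 ≤ u i) :
    UDI K u (∅ : Finset ι) = 0 ∧
    (∀ A : Finset ι, A ⊆ N → (A.card : ℝ) ≤ K → 0 ≤ UDI K u A) ∧
    (∀ A B : Finset ι, A ⊆ B → B ⊆ N → ∀ x ∈ N \ B,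
      UDI K u (insert x B) - UDI K u B ≤ UDI K u (insert x A) - UDI K u A) := by
  refine ⟨by simp [UDI], ?_, ?_⟩
  · intro A hA hK
    exact mul_nonneg (sub_nonneg.mpr hK) (Finset.sum_nonneg fun i hi => hu i (hA hi))
  · intro A B hAB hBN x hx
    obtain ⟨hxN, hxB⟩ := Finset.mem_sdiff.mp hx
    have hxA : x ∉ A := fun h => hxB (hAB h)
    have hsum : ∑ i ∈ A, u i ≤ ∑ i ∈ B, u i :=
      Finset.sum_le_sum_of_subset_of_nonneg hAB fun i hi _ => hu i (hBN hi)
    have hcard : (A.card : ℝ) ≤ B.card := by exact_mod_cast Finset.card_le_card hAB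
    have hmul := mul_le_mul_of_nonneg_right hcard (hu x hxN)
    simp only [UDI, Finset.card_insert_of_notMem hxA, Finset.card_insert_of_notMem hxB,
      Finset.sum_insert hxA, Finset.sum_insert hxB]
    push_cast
    linarith
end

section
/- Let N be a finite set, K a real number, u : N → ℝ, A ⊆ N, and let a, b ∈ N \ A be distinct. With U^{DI}(X) = (K − |X|)·Σ_{i∈X} u_i, the exchange deficiency is exactly U^{DI}(A ∪ {a}) + U^{DI}(A ∪ {b}) − U^{DI}(A ∪ {a, b}) − U^{DI}(A) = u_a + u_b; hence the submodularity inequality U^{DI}(A ∪ {a}) + U^{DI}(A ∪ {b}) ≥ U^{DI}(A ∪ {a, b}) + U^{DI}(A) holds if and only if u_a + u_b ≥ 0. -/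
/-- Key identity in the proof of the paper's Lemma 1: the exchange deficiency of
`U^{DI}` at `A` for two new elements `a ≠ b` equals `u a + u b`, hence the
submodularity inequality holds iff `u a + u b ≥ 0`. -/
theorem stmt_1 {ι : Type*} [DecidableEq ι] (N : Finset ι) (K : ℝ) (u : ι → ℝ)
    (A : Finset ι) (hA : A ⊆ N) (a b : ι) (ha : a ∈ N \ A) (hb : b ∈ N \ A)
    (hab : a ≠ b) :
    (UDI K u (insert a A) + UDI K u (insert b A)
        - UDI K u (insert a (insert b A)) - UDI K u A = u a + u b) ∧
    (UDI K u (insert a (insert b A)) + UDI K u A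
        ≤ UDI K u (insert a A) + UDI K u (insert b A) ↔ 0 ≤ u a + u b) := by
  have ha' : a ∉ A := (Finset.mem_sdiff.mp ha).2
  have hb' : b ∉ A := (Finset.mem_sdiff.mp hb).2
  have hab' : a ∉ insert b A := by simp [hab, ha']
  have key : UDI K u (insert a A) + UDI K u (insert b A)
        - UDI K u (insert a (insert b A)) - UDI K u A = u a + u b := by
    unfold UDI
    rw [Finset.sum_insert hab', Finset.sum_insert ha', Finset.sum_insert hb',
      Finset.card_insert_of_notMem hab', Finset.card_insert_of_notMem ha',
      Finset.card_insert_of_notMem hb']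
    push_cast
    ring
  refine ⟨key, ?_⟩
  constructor <;> intro h <;> linarith
end

section
/- Let u_1 ≥ u_2 ≥ … ≥ u_n ≥ 0 be real numbers and K a real number with n ≤ K. Define the marginal m(i) = (K − i − 1)·u_{i+1} − Σ_{k=1}^{i} u_k for 0 ≤ i ≤ n − 1 (equivalently m(i) = (K − i)u_{i+1} − Σ_{k=1}^{i+1} u_k). Then m is nonincreasing in i: m(i+1) ≤ m(i) for all 0 ≤ i ≤ n − 2. -/
/-- Diminishing returns (underlying the greedy stopping rule, eq. (35)): with
`u 1 ≥ … ≥ u n ≥ 0` and `n ≤ K`, the marginal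
`m(i) = (K − i − 1)·u (i+1) − Σ_{k=1}^i u k` is nonincreasing in `i` for
`0 ≤ i ≤ n − 2`. -/
theorem stmt_3 (n : ℕ) (K : ℝ) (u : ℕ → ℝ)
    (hnK : (n : ℝ) ≤ K)
    (hmono : ∀ k, 1 ≤ k → k < n → u (k + 1) ≤ u k)
    (hnonneg : ∀ k, 1 ≤ k → k ≤ n → 0 ≤ u k)
    (i : ℕ) (hi : (i : ℤ) ≤ (n : ℤ) - 2) :
    (K - (i + 1) - 1) * u (i + 2) - ∑ k ∈ Finset.Icc 1 (i + 1), u k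
      ≤ (K - i - 1) * u (i + 1) - ∑ k ∈ Finset.Icc 1 i, u k := by
  have h1 : i + 2 ≤ n := by omega
  have h2 : ((i : ℝ) + 2) ≤ n := by exact_mod_cast h1
  have h3 : u (i + 2) ≤ u (i + 1) := hmono (i + 1) (by omega) (by omega)
  have h4 : 0 ≤ u (i + 1) := hnonneg (i + 1) (by omega) (by omega)
  rw [Finset.sum_Icc_succ_top (by omega : 1 ≤ i + 1)]
  have h5 : (K - (i + 1) - 1) * u (i + 2) ≤ (K - (i + 1) - 1) * u (i + 1) :=
    mul_le_mul_of_nonneg_left h3 (by linarith)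
  linarith
end

section
/- Let u_1 ≥ u_2 ≥ … ≥ u_n ≥ 0 be real numbers, K a real number with n ≤ K, and define g(i) = (K − i)·Σ_{k=1}^{i} u_k for 0 ≤ i ≤ n and marginal m(i) = g(i+1) − g(i). If i* = min{ i : m(i) < 0 } exists, then g(i*) ≥ g(i) for all 0 ≤ i ≤ n; if no such i exists, then g(n) ≥ g(i) for all 0 ≤ i ≤ n. In other words, the greedy procedure that adds resources in decreasing order of utility and stops at the first negative marginal attains the maximum of g. -/
/-- The Direct Inspection objective `g(i) = (K − i)·Σ_{k=1}^i u k` of sensing the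
`i` best resources. -/
noncomputable def gDI (K : ℝ) (u : ℕ → ℝ) (i : ℕ) : ℝ :=
  (K - i) * ∑ k ∈ Finset.Icc 1 i, u k

/-- Paper's stopping rule, eq. (35): with `u 1 ≥ … ≥ u n ≥ 0` and `n ≤ K`, if
`i* = min{i : g(i+1) − g(i) < 0}` exists then `g i* = max_{0 ≤ i ≤ n} g i`;
otherwise `g n = max_{0 ≤ i ≤ n} g i`. -/
theorem stmt_4 (n : ℕ) (K : ℝ) (u : ℕ → ℝ)
    (hnK : (n : ℝ) ≤ K)
    (hmono : ∀ k, 1 ≤ k → k < n → u (k + 1) ≤ u k)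
    (hnonneg : ∀ k, 1 ≤ k → k ≤ n → 0 ≤ u k) :
    (∀ istar < n,
      gDI K u (istar + 1) - gDI K u istar < 0 →
      (∀ j < istar, ¬ (gDI K u (j + 1) - gDI K u j < 0)) →
      ∀ i ≤ n, gDI K u i ≤ gDI K u istar) ∧
    ((∀ i < n, ¬ (gDI K u (i + 1) - gDI K u i < 0)) →
      ∀ i ≤ n, gDI K u i ≤ gDI K u n) := by
  have hm : ∀ i, gDI K u (i + 1) - gDI K u i
      = (K - i - 1) * u (i + 1) - ∑ k ∈ Finset.Icc 1 i, u k := by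
    intro i
    simp only [gDI]
    rw [Finset.sum_Icc_succ_top (by omega)]
    push_cast
    ring
  have hdec : ∀ i, i + 2 ≤ n →
      gDI K u (i + 1 + 1) - gDI K u (i + 1) ≤ gDI K u (i + 1) - gDI K u i := by
    intro i hi
    rw [hm, hm, Finset.sum_Icc_succ_top (by omega)]
    have h1 := hmono (i + 1) (by omega) (by omega)
    have h2 := hnonneg (i + 1) (by omega) (by omega)
    have h3 : ((i : ℝ) + 2) ≤ n := by exact_mod_cast hi
    have h4 : 0 ≤ (K - i - 2) * (u (i + 1) - u (i + 1 + 1)) :=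
      mul_nonneg (by linarith) (by linarith)
    push_cast
    nlinarith
  have hup : ∀ b, (∀ j < b, ¬ (gDI K u (j + 1) - gDI K u j < 0)) →
      ∀ i ≤ b, gDI K u i ≤ gDI K u b := by
    intro b hb i hi
    induction b, hi using Nat.le_induction with
    | base => exact le_rfl
    | succ b hib ih =>
      have h1 := ih (fun j hj => hb j (by omega))
      have h2 := hb b (by omega)
      linarith
  refine ⟨?_, fun h => hup n h⟩
  intro s hs hneg hbefore i hi
  rcases le_total i s with h | h
  · exact hup s hbefore i h
  · have hneg' : ∀ j, s ≤ j → j < n → gDI K u (j + 1) - gDI K u j < 0 := by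
      intro j hj
      induction j, hj using Nat.le_induction with
      | base => exact fun _ => hneg
      | succ j hsj ih =>
        intro hjn
        have h1 := ih (by omega)
        have h2 := hdec j (by omega)
        linarith
    induction i, h using Nat.le_induction with
    | base => exact le_rfl
    | succ i hsi ih =>
      have h1 := ih (by omega)
      have h2 := hneg' i hsi (by omega)
      linarith
end

section
/- Let V be a finite vertex set, K a real number, and assign to each possible edge e (an unordered pair of vertices, possibly a self-loop) a utility u_e ≥ 0. For a finite set E of edges let U^{GT}(E) = (K − |E|)·Σ_{e∈E} u_e, let deg_E(i) be the number of edges of E incident to vertex i, and let Υ(n) = max(n − 1, 0). Then for every M > 0 the function f(E) = U^{GT}(E) − M·Σ_{i∈V} Υ(deg_E(i)) is submodular in E: for all edge sets E ⊆ F and every edge e ∉ F, f(E ∪ {e}) − f(E) ≥ f(F ∪ {e}) − f(F). -/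
/-- The Group Testing utility `U^{GT}(E) = (K − |E|)·Σ_{e∈E} u_e` of a set `E` of
tests (edges, i.e. unordered pairs of vertices, possibly self-loops). -/
noncomputable def UGTe {V : Type*} (K : ℝ) (u : Sym2 V → ℝ) (E : Finset (Sym2 V)) : ℝ :=
  (K - E.card) * ∑ e ∈ E, u e

/-- The nodal degree `deg_E(i)`: the number of edges of `E` incident to vertex `i`. -/
def degE {V : Type*} [DecidableEq V] (E : Finset (Sym2 V)) (i : V) : ℕ :=
  (E.filter fun e => i ∈ e).card

/-- The penalized objective `f(E) = U^{GT}(E) − M·Σ_{i∈V} Υ(deg_E(i))`, where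
`Υ(n) = max(n − 1, 0)`. -/
noncomputable def fPen {V : Type*} [Fintype V] [DecidableEq V]
    (K : ℝ) (u : Sym2 V → ℝ) (M : ℝ) (E : Finset (Sym2 V)) : ℝ :=
  UGTe K u E - M * ∑ i : V, max ((degE E i : ℝ) - 1) 0

/-- First part of the paper's Lemma 2: for every `M > 0` the penalized objective
`f` is submodular in the edge set. -/
theorem stmt_6 {V : Type*} [Fintype V] [DecidableEq V]
    (K : ℝ) (u : Sym2 V → ℝ) (hu : ∀ e, 0 ≤ u e) (M : ℝ) (hM : 0 < M)
    (E F : Finset (Sym2 V)) (hEF : E ⊆ F) (e : Sym2 V) (he : e ∉ F) :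
    fPen K u M (insert e F) - fPen K u M F
      ≤ fPen K u M (insert e E) - fPen K u M E := by
  have heE : e ∉ E := fun h => he (hEF h)
  have hS : ∑ x ∈ E, u x ≤ ∑ x ∈ F, u x :=
    Finset.sum_le_sum_of_subset_of_nonneg hEF (fun x _ _ => hu x)
  have hC : (E.card : ℝ) ≤ F.card := by exact_mod_cast Finset.card_le_card hEF
  have hmul : (E.card : ℝ) * u e ≤ F.card * u e := mul_le_mul_of_nonneg_right hC (hu e)
  have hU : UGTe K u (insert e F) - UGTe K u F ≤ UGTe K u (insert e E) - UGTe K u E := by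
    unfold UGTe
    rw [Finset.sum_insert he, Finset.sum_insert heE, Finset.card_insert_of_notMem he,
      Finset.card_insert_of_notMem heE]
    push_cast
    linarith
  have hD : (∑ i : V, max ((degE (insert e E) i : ℝ) - 1) 0) + ∑ i : V, max ((degE F i : ℝ) - 1) 0
      ≤ (∑ i : V, max ((degE (insert e F) i : ℝ) - 1) 0)
        + ∑ i : V, max ((degE E i : ℝ) - 1) 0 := by
    rw [← Finset.sum_add_distrib, ← Finset.sum_add_distrib]
    refine Finset.sum_le_sum fun i _ => ?_
    have hdeg : (degE E i : ℝ) ≤ degE F i := by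
      unfold degE
      exact_mod_cast Finset.card_le_card (Finset.filter_subset_filter _ hEF)
    by_cases hi : i ∈ e
    · have h1 : degE (insert e E) i = degE E i + 1 := by
        unfold degE
        rw [Finset.filter_insert, if_pos hi, Finset.card_insert_of_notMem (by simp [heE])]
      have h2 : degE (insert e F) i = degE F i + 1 := by
        unfold degE
        rw [Finset.filter_insert, if_pos hi, Finset.card_insert_of_notMem (by simp [he])]
      rw [h1, h2]
      push_cast
      have h0 : (0 : ℝ) ≤ degE E i := Nat.cast_nonneg _
      rw [add_sub_cancel_right, add_sub_cancel_right, max_eq_left h0,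
        max_eq_left (h0.trans hdeg)]
      rcases max_cases ((degE E i : ℝ) - 1) 0 with h | h <;>
      rcases max_cases ((degE F i : ℝ) - 1) 0 with h' | h' <;> linarith
    · have h1 : degE (insert e E) i = degE E i := by
        unfold degE
        rw [Finset.filter_insert, if_neg hi]
      have h2 : degE (insert e F) i = degE F i := by
        unfold degE
        rw [Finset.filter_insert, if_neg hi]
      rw [h1, h2, add_comm]
  have hMD := mul_le_mul_of_nonneg_left hD hM.le
  unfold fPen
  linarith
end

section
/- Let V be a finite vertex set, K ≥ 1 a real number, u_e ≥ 0 a utility for each edge e (unordered pair of vertices, possibly a self-loop), U^{GT}(E) = (K − |E|)·Σ_{e∈E} u_e, deg_E(i) the number of edges of E incident to i, Υ(n) = max(n − 1, 0), and f(E) = U^{GT}(E) − M·Σ_{i∈V} Υ(deg_E(i)). If M > K·max_e u_e, then: (i) every maximizer E* of f over all edge sets satisfies deg_{E*}(i) ≤ 1 for all i ∈ V; and (ii) the maximum of f over all edge sets equals the maximum of U^{GT}(E) over edge sets E satisfying the constraint deg_E(i) ≤ 1 for all i ∈ V. -/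
/-- Erasing one edge at an over-used vertex strictly improves the penalized objective. -/
theorem fPen_improve {V : Type*} [Fintype V] [DecidableEq V]
    (K : ℝ) (hK : 1 ≤ K) (u : Sym2 V → ℝ) (hu : ∀ e, 0 ≤ u e)
    (M : ℝ) (hM : ∀ e : Sym2 V, K * u e < M) (E : Finset (Sym2 V)) (i : V)
    (hi : 1 < degE E i) : ∃ E', fPen K u M E < fPen K u M E' := by
  have hpos : 0 < (E.filter fun e => i ∈ e).card := by unfold degE at hi; omega
  obtain ⟨e, he⟩ := Finset.card_pos.mp hpos
  obtain ⟨heE, hie⟩ := Finset.mem_filter.mp he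
  refine ⟨E.erase e, ?_⟩
  have hM0 : 0 < M := lt_of_le_of_lt (mul_nonneg (by linarith) (hu e)) (hM e)
  have hdi : degE (E.erase e) i + 1 = degE E i := by
    unfold degE
    rw [Finset.filter_erase, Finset.card_erase_add_one he]
  have hle : ∀ j, degE (E.erase e) j ≤ degE E j := fun j =>
    Finset.card_le_card (Finset.filter_subset_filter _ (Finset.erase_subset _ _))
  have hpen : (∑ j : V, max ((degE (E.erase e) j : ℝ) - 1) 0) + 1
      ≤ ∑ j : V, max ((degE E j : ℝ) - 1) 0 := by
    rw [← Finset.add_sum_erase _ _ (Finset.mem_univ i),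
      ← Finset.add_sum_erase (Finset.univ : Finset V)
        (fun j => max ((degE E j : ℝ) - 1) 0) (Finset.mem_univ i)]
    have h1 : ∑ j ∈ Finset.univ.erase i, max ((degE (E.erase e) j : ℝ) - 1) 0
        ≤ ∑ j ∈ Finset.univ.erase i, max ((degE E j : ℝ) - 1) 0 := by
      refine Finset.sum_le_sum fun j _ => max_le_max ?_ le_rfl
      have : (degE (E.erase e) j : ℝ) ≤ degE E j := by exact_mod_cast hle j
      linarith
    have h2 : max ((degE (E.erase e) i : ℝ) - 1) 0 + 1 ≤ max ((degE E i : ℝ) - 1) 0 := by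
      have h3 : (degE (E.erase e) i : ℝ) + 1 = degE E i := by exact_mod_cast hdi
      have h4 : (1 : ℝ) ≤ degE (E.erase e) i := by
        have : 1 ≤ degE (E.erase e) i := by omega
        exact_mod_cast this
      rw [max_eq_left (by linarith), max_eq_left (by linarith)]
      linarith
    linarith
  have hc : ((E.erase e).card : ℝ) + 1 = E.card := by
    exact_mod_cast Finset.card_erase_add_one heE
  have hs : u e + ∑ x ∈ E.erase e, u x = ∑ x ∈ E, u x := Finset.add_sum_erase _ _ heE
  have hs0 : 0 ≤ ∑ x ∈ E.erase e, u x := Finset.sum_nonneg fun x _ => hu x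
  have hcu : 0 ≤ (E.card : ℝ) * u e := mul_nonneg (Nat.cast_nonneg _) (hu e)
  have hm := mul_le_mul_of_nonneg_left hpen hM0.le
  have hMe := hM e
  unfold fPen UGTe
  rw [← hs, ← hc]
  rw [← hc] at hcu
  nlinarith

theorem fPen_feasible {V : Type*} [Fintype V] [DecidableEq V]
    (K : ℝ) (u : Sym2 V → ℝ) (M : ℝ) (E : Finset (Sym2 V))
    (h : ∀ i, degE E i ≤ 1) : fPen K u M E = UGTe K u E := by
  unfold fPen
  rw [Finset.sum_eq_zero, mul_zero, sub_zero]
  intro j _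
  have : (degE E j : ℝ) ≤ 1 := by exact_mod_cast h j
  exact max_eq_right (by linarith)

/-- Second part of the paper's Lemma 2: if `M > K·max_e u_e` then every maximizer
of the penalized objective satisfies the degree constraint, and the maximum of the
penalized objective over all edge sets equals the maximum of `U^{GT}` over edge
sets with nodal degree at most one. -/
theorem stmt_8 {V : Type*} [Fintype V] [DecidableEq V]
    (K : ℝ) (hK : 1 ≤ K) (u : Sym2 V → ℝ) (hu : ∀ e, 0 ≤ u e)
    (M : ℝ) (hM : ∀ e : Sym2 V, K * u e < M) :
    (∀ Estar : Finset (Sym2 V),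
        (∀ E : Finset (Sym2 V), fPen K u M E ≤ fPen K u M Estar) →
        ∀ i : V, degE Estar i ≤ 1) ∧
    (∀ m : ℝ,
        IsGreatest (Set.range (fPen K u M)) m ↔
        IsGreatest ((fun E => UGTe K u E) ''
          {E : Finset (Sym2 V) | ∀ i : V, degE E i ≤ 1}) m) := by
  have h1 : ∀ Estar : Finset (Sym2 V),
      (∀ E : Finset (Sym2 V), fPen K u M E ≤ fPen K u M Estar) →
      ∀ i : V, degE Estar i ≤ 1 := by
    intro Es hmax i
    by_contra hi
    obtain ⟨E', hE'⟩ := fPen_improve K hK u hu M hM Es i (not_le.mp hi)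
    exact absurd (hmax E') (not_le.mpr hE')
  refine ⟨h1, fun m => ⟨?_, ?_⟩⟩
  · rintro ⟨⟨E, rfl⟩, hub⟩
    have hf := h1 E fun E' => hub ⟨E', rfl⟩
    refine ⟨⟨E, hf, (fPen_feasible K u M E hf).symm⟩, ?_⟩
    rintro _ ⟨E', hE', rfl⟩
    have := hub ⟨E', rfl⟩
    rwa [fPen_feasible K u M E' hE'] at this
  · rintro ⟨⟨E, hE, rfl⟩, hub⟩
    refine ⟨⟨E, fPen_feasible K u M E hE⟩, ?_⟩
    rintro _ ⟨E', rfl⟩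
    obtain ⟨Es, hEs⟩ := Finite.exists_max (fPen K u M)
    have hf := h1 Es hEs
    have h2 := hub ⟨Es, hf, rfl⟩
    have h3 := hEs E'
    rw [fPen_feasible K u M Es hf] at h3
    exact h3.trans h2
end

section
/- Let u_1 ≥ u_2 ≥ … be real numbers with u_k ≥ 0 for all k, let K be a real number, and let i be a nonnegative integer with 2i + 1 ≥ K. Then (K − i − 1)·u_{i+1} ≤ Σ_{k=1}^{i} u_k; i.e., the marginal increment of the objective g(i) = (K − i)·Σ_{k=1}^{i} u_k of adding an (i+1)-th test is nonpositive once i ≥ (K−1)/2. Consequently the number of tests selected by the greedy maximization never exceeds ⌈(K−1)/2⌉. -/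
/-- Paper's claim that the greedy never selects more than `⌈(K−1)/2⌉` tests: with
`u 1 ≥ u 2 ≥ … ≥ 0` and `2i + 1 ≥ K`, the marginal increment is nonpositive,
i.e. `(K − i − 1)·u (i+1) ≤ Σ_{k=1}^i u k`. -/
theorem stmt_11 (K : ℝ) (u : ℕ → ℝ)
    (hmono : ∀ k, 1 ≤ k → u (k + 1) ≤ u k)
    (hnonneg : ∀ k, 1 ≤ k → 0 ≤ u k)
    (i : ℕ) (hi : K ≤ 2 * i + 1) :
    (K - i - 1) * u (i + 1) ≤ ∑ k ∈ Finset.Icc 1 i, u k := by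
  have key : ∀ n : ℕ, (n : ℝ) * u (n + 1) ≤ ∑ k ∈ Finset.Icc 1 n, u k := by
    intro n
    induction n with
    | zero => simp
    | succ n ih =>
      rw [Finset.sum_Icc_succ_top (by omega)]
      have h := hmono (n + 1) (by omega)
      have hn : (0 : ℝ) ≤ n := Nat.cast_nonneg n
      have h2 := mul_le_mul_of_nonneg_left h hn
      push_cast
      linarith
  have h0 := hnonneg (i + 1) (by omega)
  have h1 : (K - i - 1) * u (i + 1) ≤ (i : ℝ) * u (i + 1) :=
    mul_le_mul_of_nonneg_right (by linarith) h0
  exact h1.trans (key i)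
end

section
/- Let V be a finite set, K ≥ 2 a real number, L ≥ 1 an integer, and u a nonnegative utility assigned to each nonempty subset ('test') C ⊆ V with |C| ≤ L. For a finite family 𝒞 of pairwise disjoint tests define U^{GT}(𝒞) = (K − |𝒞|)·Σ_{C∈𝒞} u(C). Let C_1, …, C_m be a greedy sequence: the C_j are pairwise disjoint tests of size at most L such that, for each j, C_j has maximal utility u(C_j) among all tests of size at most L disjoint from C_1,…,C_{j−1}, the marginal increment U^{GT}({C_1,…,C_j}) − U^{GT}({C_1,…,C_{j−1}}) is positive at every step, and at termination no test of size at most L disjoint from C_1,…,C_m has positive marginal increment. Let L_eff = max_{1≤j≤m} |C_j| and μ = min{L_eff, K/2}. Then U^{GT}({C_1,…,C_m}) ≥ α · max{ U^{GT}(𝒞) : 𝒞 a family of pairwise disjoint tests of size at most L }, where α = (1/μ)·(K − 1)/(K − μ). -/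
/-- The Group Testing utility `U^{GT}(𝒞) = (K − |𝒞|)·Σ_{C∈𝒞} u(C)` of a family `𝒞`
of tests over horizon `K`. -/
noncomputable def UGTc {V : Type*} (K : ℝ) (u : Finset V → ℝ) (𝒞 : Finset (Finset V)) : ℝ :=
  (K - 𝒞.card) * ∑ C ∈ 𝒞, u C

open Classical in
lemma aux_count {V : Type*} [DecidableEq V] (𝒞 : Finset (Finset V)) (A : Finset V)
    (hd : ∀ D ∈ 𝒞, ∀ D' ∈ 𝒞, D ≠ D' → Disjoint D D') :
    (𝒞.filter (fun D => ¬ Disjoint D A)).card ≤ A.card := by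
  have h : ∀ D ∈ 𝒞.filter (fun D => ¬ Disjoint D A), ∃ x, x ∈ D ∧ x ∈ A := by
    intro D hD
    exact Finset.not_disjoint_iff.mp (Finset.mem_filter.mp hD).2
  rcases A.eq_empty_or_nonempty with hA | ⟨a, _⟩
  · subst hA; simp
  haveI : Nonempty V := ⟨a⟩
  choose! f hf using h
  apply Finset.card_le_card_of_injOn f
  · intro D hD
    exact (hf D hD).2
  · intro D hD D' hD' he
    by_contra hne
    have h1 := hd D (Finset.mem_filter.mp hD).1 D' (Finset.mem_filter.mp hD').1 hne
    have h2 := (hf D hD).1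
    have h3 := (hf D' hD').1
    rw [← he] at h3
    exact Finset.disjoint_left.mp h1 h2 h3

open Classical in
lemma aux_sum {V : Type*} [DecidableEq V] (𝒞 : Finset (Finset V)) (u : Finset V → ℝ)
    (hd : ∀ D ∈ 𝒞, ∀ D' ∈ 𝒞, D ≠ D' → Disjoint D D')
    (C : ℕ → Finset V) (q l : ℕ) (t : ℝ)
    (hl : ∀ j < q, (C j).card ≤ l)
    (htg : ∀ j < q, t ≤ u (C j))
    (hD : ∀ D ∈ 𝒞, u D ≤ t ∨ ∃ j < q, ¬ Disjoint D (C j) ∧ u D ≤ u (C j)) :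
    ∑ D ∈ 𝒞, u D ≤ 𝒞.card * t + l * (∑ j ∈ Finset.range q, u (C j) - q * t) := by
  have h1 : ∀ D ∈ 𝒞, u D ≤ t + ∑ j ∈ Finset.range q,
      (if ¬ Disjoint D (C j) then (u (C j) - t) else 0) := by
    intro D hDm
    have hnn : ∀ j ∈ Finset.range q,
        0 ≤ (if ¬ Disjoint D (C j) then (u (C j) - t) else 0) := by
      intro j hj
      have := htg j (Finset.mem_range.mp hj)
      split_ifs <;> linarith
    rcases hD D hDm with h | ⟨j, hj, hnd, hle⟩
    · have := Finset.sum_nonneg hnn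
      linarith
    · have := Finset.single_le_sum hnn (Finset.mem_range.mpr hj)
      rw [if_pos hnd] at this
      linarith
  calc ∑ D ∈ 𝒞, u D ≤ ∑ D ∈ 𝒞, (t + ∑ j ∈ Finset.range q,
      (if ¬ Disjoint D (C j) then (u (C j) - t) else 0)) := Finset.sum_le_sum h1
    _ = 𝒞.card * t + ∑ j ∈ Finset.range q,
        ((𝒞.filter (fun D => ¬ Disjoint D (C j))).card : ℝ) * (u (C j) - t) := by
      rw [Finset.sum_add_distrib, Finset.sum_const, nsmul_eq_mul, Finset.sum_comm]
      congr 1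
      apply Finset.sum_congr rfl
      intro j _
      rw [← Finset.sum_filter, Finset.sum_const, nsmul_eq_mul]
    _ ≤ 𝒞.card * t + ∑ j ∈ Finset.range q, (l : ℝ) * (u (C j) - t) := by
      gcongr with j hj
      · have := htg j (Finset.mem_range.mp hj)
        linarith
      · exact (aux_count 𝒞 (C j) hd).trans (hl j (Finset.mem_range.mp hj))
    _ = _ := by
      rw [← Finset.mul_sum, Finset.sum_sub_distrib]
      simp

lemma aux_image {V : Type*} [DecidableEq V] (u : Finset V → ℝ) (m : ℕ)
    (C : ℕ → Finset V) (hne : ∀ j < m, (C j).Nonempty)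
    (hdisj : ∀ j < m, ∀ j' < m, j ≠ j' → Disjoint (C j) (C j')) (k : ℕ) (hk : k ≤ m) :
    ((Finset.range k).image C).card = k ∧
    ∑ D ∈ (Finset.range k).image C, u D = ∑ j ∈ Finset.range k, u (C j) := by
  have hinj : Set.InjOn C (Finset.range k : Finset ℕ) := by
    intro i hi j hj he
    by_contra hij
    have hi' : i < m := by simp at hi; omega
    have hj' : j < m := by simp at hj; omega
    have := hdisj i hi' j hj' hij
    rw [← he, disjoint_self] at this
    exact (hne i hi').ne_empty this
  refine ⟨?_, Finset.sum_image hinj⟩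
  rw [Finset.card_image_of_injOn hinj, Finset.card_range]

/-- Arithmetic core. -/
lemma aux_arith (K S T F l q s y : ℝ) (hK : 2 ≤ K) (hl : 1 ≤ l) (_hlK : l ≤ K / 2)
    (hq : 1 ≤ q) (hs : s = 0 ∨ 1 ≤ s) (hn : l * q + s < K) (hy : y = K - q)
    (hF : 0 ≤ F) (h0 : s = 0 → T ≤ l * S) (hyS : y * S ≤ F)
    (h1 : 1 ≤ s → y * (y - 1) * T ≤ F * (l * (y - 1) + s)) :
    (K - 1) * ((K - (l * q + s)) * T) ≤ l * (K - l) * F := by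
  have hlq : q ≤ l * q := by nlinarith
  have key : (K - 1) * (K - l * q) ≤ (K - l) * y := by
    have : 0 ≤ K * ((l - 1) * (q - 1)) := by
      have : 0 ≤ (l - 1) * (q - 1) := mul_nonneg (by linarith) (by linarith)
      nlinarith
    subst hy
    nlinarith
  rcases hs with hs | hs
  · subst hs
    have hT := h0 rfl
    have ha : 0 ≤ (K - 1) * (K - l * q) := mul_nonneg (by linarith) (by linarith)
    have hy0 : 0 < y := by linarith
    -- multiply by y
    have e1 : (K - 1) * (K - l * q) * T ≤ (K - 1) * (K - l * q) * (l * S) :=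
      mul_le_mul_of_nonneg_left hT ha
    have e2 : (K - 1) * (K - l * q) * l * (y * S) ≤ (K - 1) * (K - l * q) * l * F :=
      mul_le_mul_of_nonneg_left hyS (mul_nonneg ha (by linarith))
    have e3 : (K - 1) * (K - l * q) * (l * F) ≤ (K - l) * y * (l * F) :=
      mul_le_mul_of_nonneg_right key (mul_nonneg (by linarith) hF)
    have e4 : y * ((K - 1) * (K - l * q) * T) ≤ y * ((K - 1) * (K - l * q) * (l * S)) :=
      mul_le_mul_of_nonneg_left e1 hy0.le
    have : y * ((K - 1) * ((K - (l * q + 0)) * T)) ≤ y * (l * (K - l) * F) := by nlinarith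
    exact le_of_mul_le_mul_left this hy0
  · have hT := h1 hs
    have hy1 : 0 < y - 1 := by linarith
    have hy0 : 0 < y := by linarith
    have hyy : 0 < y * (y - 1) := mul_pos hy0 hy1
    have e0 : (K - (l * q + s)) * (l * (y - 1) + s) ≤ (K - l * q) * (l * (y - 1)) := by
      have h : 0 ≤ s * (s - (K - l * (K - 1))) :=
        mul_nonneg (by linarith) (by nlinarith)
      subst hy
      nlinarith
    have ha : 0 ≤ (K - 1) * (K - (l * q + s)) := mul_nonneg (by linarith) (by linarith)
    have e1 := mul_le_mul_of_nonneg_left hT ha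
    have e2 := mul_le_mul_of_nonneg_left e0 (mul_nonneg (by linarith : 0 ≤ K - 1) hF)
    have e3 := mul_le_mul_of_nonneg_right key
      (mul_nonneg (mul_nonneg (by linarith : 0 ≤ l) hy1.le) hF)
    have : (y * (y - 1)) * ((K - 1) * ((K - (l * q + s)) * T))
        ≤ (y * (y - 1)) * (l * (K - l) * F) := by nlinarith
    exact le_of_mul_le_mul_left this hyy

/-- Paper's Lemma 3: the greedy algorithm that repeatedly adds a maximal-utility
test (a nonempty subset of at most `L` resources, disjoint from the previously
chosen tests) while the marginal increment of `U^{GT}` remains positive achieves an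
`α`-factor approximation of the best family of pairwise disjoint tests, where
`α = (1/μ)·(K − 1)/(K − μ)` and `μ = min{L_eff, K/2}` with `L_eff` the largest test
size in the greedy output. -/
theorem stmt_12 {V : Type*} [Fintype V] [DecidableEq V]
    (K : ℝ) (hK : 2 ≤ K) (L : ℕ) (hL : 1 ≤ L)
    (u : Finset V → ℝ)
    (hu : ∀ C : Finset V, C.Nonempty → C.card ≤ L → 0 ≤ u C)
    (m : ℕ) (C : ℕ → Finset V)
    (htest : ∀ j < m, (C j).Nonempty ∧ (C j).card ≤ L)
    (hdisj : ∀ j < m, ∀ j' < m, j ≠ j' → Disjoint (C j) (C j'))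
    (hmaxsel : ∀ j < m, ∀ D : Finset V, D.Nonempty → D.card ≤ L →
        (∀ j' < j, Disjoint D (C j')) → u D ≤ u (C j))
    (hpos : ∀ j < m,
        0 < UGTc K u ((Finset.range (j + 1)).image C)
            - UGTc K u ((Finset.range j).image C))
    (hterm : ∀ D : Finset V, D.Nonempty → D.card ≤ L →
        (∀ j < m, Disjoint D (C j)) →
        UGTc K u (insert D ((Finset.range m).image C))
            - UGTc K u ((Finset.range m).image C) ≤ 0) :
    ∀ 𝒞 : Finset (Finset V),
      (∀ D ∈ 𝒞, D.Nonempty ∧ D.card ≤ L) →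
      (∀ D ∈ 𝒞, ∀ D' ∈ 𝒞, D ≠ D' → Disjoint D D') →
      1 / min ((((Finset.range m).sup fun j => (C j).card) : ℕ) : ℝ) (K / 2)
          * ((K - 1)
              / (K - min ((((Finset.range m).sup fun j => (C j).card) : ℕ) : ℝ) (K / 2)))
          * UGTc K u 𝒞
        ≤ UGTc K u ((Finset.range m).image C) := by
  intro 𝒞 h𝒞 h𝒞d
  have hne : ∀ j < m, (C j).Nonempty := fun j hj => (htest j hj).1
  have himg := aux_image u m C hne hdisj
  set g : ℕ → ℝ := fun j => u (C j) with hg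
  set S : ℕ → ℝ := fun k => ∑ j ∈ Finset.range k, u (C j) with hS
  have hU : ∀ k ≤ m, UGTc K u ((Finset.range k).image C) = (K - k) * S k := by
    intro k hk
    obtain ⟨a, b⟩ := himg k hk
    unfold UGTc
    rw [a, b]
  have hg0 : ∀ j < m, 0 ≤ u (C j) := fun j hj => hu _ (htest j hj).1 (htest j hj).2
  have hanti : ∀ i j, i ≤ j → j < m → u (C j) ≤ u (C i) := by
    intro i j hij hj
    apply hmaxsel i (by omega) _ (htest j hj).1 (htest j hj).2
    intro j' hj'
    exact hdisj j hj j' (by omega) (by omega)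
  have hS0 : ∀ k ≤ m, 0 ≤ S k := by
    intro k hk
    apply Finset.sum_nonneg
    intro j hj
    exact hg0 j (by simp at hj; omega)
  have hSs : ∀ k, S (k + 1) = S k + u (C k) := fun k => Finset.sum_range_succ _ _
  set F := UGTc K u ((Finset.range m).image C) with hFdef
  have hmono : ∀ d k, k + d = m → (K - k) * S k ≤ F := by
    intro d
    induction d with
    | zero =>
      intro k hk
      have : k = m := by omega
      subst this
      rw [hFdef, hU k le_rfl]
    | succ d ih =>
      intro k hk
      have h1 := ih (k + 1) (by omega)
      have h2 := hpos k (by omega)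
      rw [hU k (by omega), hU (k + 1) (by omega)] at h2
      linarith
  have hfk : ∀ k ≤ m, (K - k) * S k ≤ F := fun k hk => hmono (m - k) k (by omega)
  have hF0 : 0 ≤ F := by
    have := hfk 0 (Nat.zero_le _)
    simpa [hS] using this
  set l : ℕ := (Finset.range m).sup fun j => (C j).card with hl
  have hlj : ∀ j < m, (C j).card ≤ l := by
    intro j hj
    exact Finset.le_sup (f := fun j => (C j).card) (Finset.mem_range.mpr hj)
  rcases Nat.eq_zero_or_pos m with hm | hm
  · have hl0 : l = 0 := by rw [hl, hm]; simp
    have : min ((l : ℕ) : ℝ) (K / 2) = 0 := by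
      rw [hl0]; simp; linarith
    rw [this]
    simpa using hF0
  have hl1 : 1 ≤ l := le_trans (Finset.card_pos.mpr (hne 0 hm)) (hlj 0 hm)
  have hl1' : (1 : ℝ) ≤ l := by exact_mod_cast hl1
  set μ := min ((l : ℕ) : ℝ) (K / 2) with hμ
  have hμ1 : 1 ≤ μ := le_min hl1' (by linarith)
  have hμK : μ ≤ K / 2 := min_le_right _ _
  have hd0 : 0 ≤ ∑ D ∈ 𝒞, u D :=
    Finset.sum_nonneg fun D hD => hu D (h𝒞 D hD).1 (h𝒞 D hD).2
  have hden : 0 < μ * (K - μ) := mul_pos (by linarith) (by linarith)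
  suffices hmain : (K - 1) * UGTc K u 𝒞 ≤ μ * (K - μ) * F by
    have : 1 / μ * ((K - 1) / (K - μ)) * UGTc K u 𝒞
        = ((K - 1) * UGTc K u 𝒞) / (μ * (K - μ)) := by
      rw [div_mul_div_comm, one_mul, div_mul_eq_mul_div]
    rw [this, div_le_iff₀ hden]
    linarith
  unfold UGTc
  set n := 𝒞.card with hn
  set T := ∑ D ∈ 𝒞, u D with hT
  rcases le_or_gt K (n : ℝ) with hnK | hnK
  · have h1 : (K - n) * T ≤ 0 := mul_nonpos_of_nonpos_of_nonneg (by linarith) hd0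
    have h2 : (K - 1) * ((K - n) * T) ≤ 0 :=
      mul_nonpos_of_nonneg_of_nonpos (by linarith) h1
    have h3 := mul_nonneg hden.le hF0
    linarith
  -- the crude bound
  have hg1 : (K - 1) * u (C 0) ≤ F := by
    have := hfk 1 hm
    simpa [hS] using this
  have hcrude : T ≤ n * u (C 0) := by
    rw [hT, hn, ← nsmul_eq_mul]
    apply Finset.sum_le_card_nsmul
    intro D hD
    exact hmaxsel 0 hm D (h𝒞 D hD).1 (h𝒞 D hD).2 (by intro j' hj'; omega)
  have hcrude2 : (K - 1) * ((K - n) * T) ≤ (n * (K - n)) * F := by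
    have a : (0 : ℝ) ≤ (K - 1) * (K - n) := mul_nonneg (by linarith) (by linarith)
    have b := mul_le_mul_of_nonneg_left hcrude a
    have c : (0 : ℝ) ≤ n * (K - n) := mul_nonneg (by positivity) (by linarith)
    have d := mul_le_mul_of_nonneg_left hg1 c
    nlinarith
  rcases lt_or_ge (K / 2) (l : ℝ) with hlK | hlK
  · have hμe : μ = K / 2 := min_eq_right hlK.le
    refine hcrude2.trans (mul_le_mul_of_nonneg_right ?_ hF0)
    rw [hμe]
    nlinarith [sq_nonneg (K / 2 - n)]
  have hμe : μ = l := min_eq_left hlK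
  rw [hμe]
  rcases lt_or_ge n l with hnl | hnl
  · have hnl' : (n : ℝ) ≤ l := by exact_mod_cast hnl.le
    refine hcrude2.trans (mul_le_mul_of_nonneg_right ?_ hF0)
    nlinarith [mul_nonneg (sub_nonneg.mpr hnl') (by linarith : (0 : ℝ) ≤ K - l - n)]
  have hfind : ∀ q ≤ m, ∀ D ∈ 𝒞, (∀ j < q, Disjoint D (C j)) ∨
      ∃ j < q, ¬ Disjoint D (C j) ∧ u D ≤ u (C j) := by
    intro q hq D hD
    by_cases hex : ∃ j, j < q ∧ ¬ Disjoint D (C j)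
    · right
      classical
      obtain ⟨ha, hb⟩ := Nat.find_spec hex
      refine ⟨Nat.find hex, ha, hb, ?_⟩
      apply hmaxsel _ (by omega) D (h𝒞 D hD).1 (h𝒞 D hD).2
      intro j' hj'
      have := Nat.find_min hex hj'
      by_contra hc
      exact this ⟨by omega, hc⟩
    · left
      intro j hj
      by_contra hc
      exact hex ⟨j, hj, hc⟩
  rcases lt_or_ge (n / l) m with hqm | hqm
  · -- inside the greedy sequence
    obtain ⟨q, hq⟩ : ∃ q, q = n / l := ⟨_, rfl⟩
    obtain ⟨s, hs⟩ : ∃ s, s = n % l := ⟨_, rfl⟩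
    have hnq : n = l * q + s := by rw [hq, hs]; exact (Nat.div_add_mod n l).symm
    have hsl : s < l := by rw [hs]; exact Nat.mod_lt _ hl1
    have hq1 : 1 ≤ q := by rw [hq]; exact Nat.div_pos hnl hl1
    rw [← hq] at hqm
    have hsum := aux_sum 𝒞 u h𝒞d C q l (u (C q)) (fun j hj => hlj j (by omega))
      (fun j hj => hanti j q hj.le hqm)
      (by
        intro D hD
        rcases hfind q hqm.le D hD with h | h
        · left
          exact hmaxsel q hqm D (h𝒞 D hD).1 (h𝒞 D hD).2 h
        · right; exact h)
    have hnq' : (n : ℝ) = l * q + s := by exact_mod_cast hnq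
    have hTb : T ≤ l * S q + s * u (C q) := by
      rw [← hn, hnq'] at hsum
      calc T ≤ _ := hsum
        _ = _ := by simp only [hS]; ring
    have hA := hfk q hqm.le
    have hB := hfk (q + 1) hqm
    rw [hSs] at hB
    push_cast at hB
    rw [hnq']
    have hq1' : (1 : ℝ) ≤ q := by exact_mod_cast hq1
    have hsl' : (s : ℝ) ≤ l := by exact_mod_cast hsl.le
    have hs0 : (0 : ℝ) ≤ s := by positivity
    apply aux_arith K (S q) T F l q s (K - q) hK hl1' hlK hq1' _ (by linarith) rfl hF0
    · intro h; rw [h] at hTb; linarith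
    · exact hA
    · intro h1s
      have hlq : (q : ℝ) ≤ l * q := by nlinarith
      have hy1 : 0 < K - q - 1 := by linarith
      have hyy : 0 < (K - q) * (K - q - 1) := mul_pos (by linarith) hy1
      have e1 := mul_le_mul_of_nonneg_left hTb hyy.le
      have e2 := mul_le_mul_of_nonneg_left hA
        (mul_nonneg (sub_nonneg.mpr hsl') hy1.le)
      have e3 := mul_le_mul_of_nonneg_left hB
        (mul_nonneg hs0 (by linarith : 0 ≤ K - q))
      linear_combination e1 + e2 + e3
    · rcases Nat.eq_zero_or_pos s with h | h
      · left; rw [h]; simp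
      · right; exact_mod_cast h
  · -- all greedy tests used
    have hlm : l * m ≤ n := by
      calc l * m ≤ l * (n / l) := Nat.mul_le_mul_left _ hqm
        _ ≤ n := Nat.mul_div_le n l
    obtain ⟨s, hnq⟩ := Nat.exists_eq_add_of_le hlm
    have hFm : F = (K - m) * S m := hU m le_rfl
    have hnq' : (n : ℝ) = l * m + s := by exact_mod_cast hnq
    have hm1' : (1 : ℝ) ≤ m := by exact_mod_cast hm
    have hs0 : (0 : ℝ) ≤ s := by positivity
    have htm : ∀ D ∈ 𝒞, (∀ j < m, Disjoint D (C j)) → (K - m - 1) * u D ≤ S m := by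
      intro D hD hDd
      have h1 := hterm D (h𝒞 D hD).1 (h𝒞 D hD).2 hDd
      have hni : D ∉ (Finset.range m).image C := by
        intro h
        obtain ⟨j, hj, rfl⟩ := Finset.mem_image.mp h
        have := hDd j (Finset.mem_range.mp hj)
        rw [disjoint_self] at this
        exact (h𝒞 _ hD).1.ne_empty this
      rw [hFm] at h1
      unfold UGTc at h1
      rw [Finset.card_insert_of_notMem hni, Finset.sum_insert hni,
        (himg m le_rfl).1, (himg m le_rfl).2] at h1
      push_cast at h1
      have : S m = ∑ j ∈ Finset.range m, u (C j) := rfl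
      rw [← this] at h1
      nlinarith
    obtain ⟨t, ht1, ht2, ht3⟩ : ∃ t : ℝ, (∀ D ∈ 𝒞, (∀ j < m, Disjoint D (C j)) → u D ≤ t) ∧
        (∀ j < m, t ≤ u (C j)) ∧ (K - m - 1) * t ≤ S m := by
      classical
      rcases (𝒞.filter (fun D => ∀ j < m, Disjoint D (C j))).eq_empty_or_nonempty with he | he
      · refine ⟨0, ?_, hg0, by simpa using hS0 m le_rfl⟩
        intro D hD hDd
        have : D ∈ 𝒞.filter (fun D => ∀ j < m, Disjoint D (C j)) :=
          Finset.mem_filter.mpr ⟨hD, hDd⟩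
        rw [he] at this
        simp at this
      · obtain ⟨D0, hD0, hmax⟩ := Finset.exists_max_image _ u he
        obtain ⟨ha, hb⟩ := Finset.mem_filter.mp hD0
        refine ⟨u D0, ?_, ?_, htm D0 ha hb⟩
        · intro D hD hDd
          exact hmax D (Finset.mem_filter.mpr ⟨hD, hDd⟩)
        · intro j hj
          exact hmaxsel j hj D0 (h𝒞 D0 ha).1 (h𝒞 D0 ha).2 (fun j' hj' => hb j' (by omega))
    have hsum := aux_sum 𝒞 u h𝒞d C m l t hlj ht2
      (by
        intro D hD
        rcases hfind m le_rfl D hD with h | h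
        · left; exact ht1 D hD h
        · right; exact h)
    have hTb : T ≤ l * S m + s * t := by
      rw [← hn, hnq'] at hsum
      calc T ≤ _ := hsum
        _ = _ := by simp only [hS]; ring
    rw [hnq']
    apply aux_arith K (S m) T F l m s (K - m) hK hl1' hlK hm1' _ (by linarith) rfl hF0
    · intro h; rw [h] at hTb; linarith
    · exact hFm.ge
    · intro h1s
      have hlq : (m : ℝ) ≤ l * m := by nlinarith
      have hy1 : 0 < K - m - 1 := by linarith
      have hy0 : 0 < K - m := by linarith
      have hyy : 0 < (K - m) * (K - m - 1) := mul_pos hy0 hy1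
      have e1 := mul_le_mul_of_nonneg_left hTb hyy.le
      have e3 := mul_le_mul_of_nonneg_left ht3 (mul_nonneg hs0 hy0.le)
      rw [hFm]
      linear_combination e1 + e3
    · rcases Nat.eq_zero_or_pos s with h | h
      · left; rw [h]; simp
      · right; exact_mod_cast h
end

section
/- Let K ≥ 2 and L ≥ 1 be real numbers, and set μ = min{L, K/2}; assume μ ≥ 1. Then for all real numbers d and x with 1 ≤ d ≤ μ, 1 ≤ x, and x + d ≤ K, it holds that (K − x)/(d·(K − x − d + 1)) ≥ (K − 1)/(μ·(K − μ)). -/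
/-- Final arithmetic inequality in the proof of the paper's Lemma 3: with
`μ = min{L, K/2} ≥ 1`, for all `1 ≤ d ≤ μ`, `1 ≤ x` and `x + d ≤ K`,
`(K − x)/(d·(K − x − d + 1)) ≥ (K − 1)/(μ·(K − μ))`. -/
theorem stmt_14 (K L : ℝ) (hK : 2 ≤ K) (hL : 1 ≤ L)
    (hμ : 1 ≤ min L (K / 2)) (d x : ℝ)
    (hd1 : 1 ≤ d) (hdμ : d ≤ min L (K / 2)) (hx : 1 ≤ x) (hxd : x + d ≤ K) :
    (K - 1) / (min L (K / 2) * (K - min L (K / 2)))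
      ≤ (K - x) / (d * (K - x - d + 1)) := by
  have hm : min L (K / 2) ≤ K / 2 := min_le_right _ _
  generalize min L (K / 2) = m at *
  have h1 : 0 < d * (K - d) := mul_pos (by linarith) (by linarith)
  have h2 : d * (K - d) ≤ m * (K - m) := by
    nlinarith [mul_nonneg (sub_nonneg.2 hdμ) (by linarith : (0 : ℝ) ≤ K - m - d)]
  have h3 : 0 < d * (K - x - d + 1) := mul_pos (by linarith) (by linarith)
  calc (K - 1) / (m * (K - m)) ≤ (K - 1) / (d * (K - d)) :=
        div_le_div_of_nonneg_left (by linarith) h1 h2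
    _ ≤ (K - x) / (d * (K - x - d + 1)) := by
        rw [div_le_div_iff₀ h1 h3]
        have h4 : 0 ≤ d * ((d - 1) * (x - 1)) :=
          mul_nonneg (by linarith) (mul_nonneg (by linarith) (by linarith))
        linarith [h4]
end
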